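/- For every Jordan curve Γ ⊆ ℂ (the image of a continuous injective map from the unit circle into ℂ) and every ε > 0, there exists a smooth Jordan curve within Hausdorff distance ε of Γ; that is, there exists an infinitely differentiable map γ : ℝ → ℂ with period 2π, injective on [0, 2π), with nowhere-vanishing derivative, whose image is at Hausdorff distance less than ε from Γ. -/

import Mathlib

open Real

/-!
The curve `γ` is obtained by deforming a small round circle, and only the connectedness of `Γ` is
needed. Put `δ = ε / 2`, let `U` be the open `δ`-thickening of `Γ`, which is connected, and let
`S ⊆ Γ` be a finite `δ`-net. Any smooth Jordan curve that lies in `U` and passes through every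
point of `S` is at Hausdorff distance at most `δ` from `Γ`.

Such a curve is built by induction on `S` (`exists_smoothJordan_through`), starting from a circle
in `U`. To add a point `p`, choose a point `q` of the current curve outside `S` and push the curve
forward by a smooth embedding of the plane that takes `q` to `p`, and is the identity on `S` and
outside `U`. The embedding exists because `U \ S` is still open and connected
(`isPreconnected_diff_finite`), and because in an open connected set `V` any point can be moved to
any other by an embedding that is the identity outside `V` (`Movable.of_isPreconnected`). Locally
such an embedding is `z ↦ z + φ z • v` with `φ` a bump function and `v` a short vector; the general
case follows because local transitivity propagates along connected sets.
-/

open Set Metric Topology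

/-! ### Smooth embeddings and smooth Jordan curves -/

/-- An injective immersion of class `C^∞` of the plane into itself. -/
structure IsSmoothEmb (f : ℂ → ℂ) : Prop where
  contDiff : ContDiff ℝ (⊤ : ℕ∞) f
  inj : Function.Injective f
  fderiv_ne : ∀ z w : ℂ, w ≠ 0 → fderiv ℝ f z w ≠ 0

/-- A regular, `2π`-periodic, `C^∞` parametrization of a Jordan curve. -/
structure IsSmoothJordan (γ : ℝ → ℂ) : Prop where
  contDiff : ContDiff ℝ (⊤ : ℕ∞) γ
  periodic : ∀ t : ℝ, γ (t + 2 * π) = γ t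
  injOn : Set.InjOn γ (Set.Ico 0 (2 * π))
  deriv_ne : ∀ t : ℝ, deriv γ t ≠ 0

lemma IsSmoothEmb.comp {f g : ℂ → ℂ} (hg : IsSmoothEmb g) (hf : IsSmoothEmb f) :
    IsSmoothEmb (g ∘ f) where
  contDiff := hg.contDiff.comp hf.contDiff
  inj := hg.inj.comp hf.inj
  fderiv_ne z w hw := by
    rw [fderiv_comp z (hg.contDiff.differentiable (by simp) _)
      (hf.contDiff.differentiable (by simp) _)]
    exact hg.fderiv_ne _ _ (hf.fderiv_ne _ _ hw)

lemma IsSmoothJordan.comp {f : ℂ → ℂ} {γ : ℝ → ℂ} (hf : IsSmoothEmb f) (hγ : IsSmoothJordan γ) :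
    IsSmoothJordan (f ∘ γ) where
  contDiff := hf.contDiff.comp hγ.contDiff
  periodic t := by simp [hγ.periodic t]
  injOn := hf.inj.comp_injOn hγ.injOn
  deriv_ne t := by
    rw [fderiv_comp_deriv t (hf.contDiff.differentiable (by simp) _)
      (hγ.contDiff.differentiable (by simp) _)]
    exact hf.fderiv_ne _ _ (hγ.deriv_ne t)

lemma isSmoothJordan_circleMap (c : ℂ) {R : ℝ} (hR : 0 < R) : IsSmoothJordan (circleMap c R) where
  contDiff := contDiff_circleMap c R
  periodic := periodic_circleMap c R
  injOn := injOn_circleMap_of_abs_sub_le' hR.ne' (by simp)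
  deriv_ne _ := deriv_circleMap_ne_zero hR.ne'

/-- A short displacement cut off by a Lipschitz function is an embedding: it is a perturbation of
the identity by a map of Lipschitz constant less than `1`. -/
lemma isSmoothEmb_bump {φ : ℂ → ℝ} (hφ : ContDiff ℝ (⊤ : ℕ∞) φ) {K : NNReal}
    (hK : LipschitzWith K φ) {v : ℂ} (hv : K * ‖v‖ < 1) :
    IsSmoothEmb (fun z ↦ z + φ z • v) where
  contDiff := contDiff_id.add (hφ.smul contDiff_const)
  inj z w h := by
    by_contra hne
    have hpos : 0 < ‖z - w‖ := norm_pos_iff.2 (sub_ne_zero.2 hne)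
    have h1 : z - w = (φ w - φ z) • v := by
      simp only at h
      rw [sub_smul]
      linear_combination h
    have h2 : ‖z - w‖ = |φ w - φ z| * ‖v‖ := by
      conv_lhs => rw [h1]
      rw [norm_smul, Real.norm_eq_abs]
    have h3 : |φ w - φ z| ≤ K * ‖z - w‖ := by
      have := hK.dist_le_mul w z
      rwa [Real.dist_eq, dist_comm, dist_eq_norm] at this
    nlinarith [norm_nonneg v]
  fderiv_ne z w hw h := by
    have hd : HasFDerivAt φ (fderiv ℝ φ z) z := (hφ.differentiable (by simp) z).hasFDerivAt
    have hf := ((hasFDerivAt_id z).add (hd.smul_const v)).fderiv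
    have h0 : w + (fderiv ℝ φ z w) • v = 0 := by
      have := congrArg (fun L ↦ L w) hf
      simp only [add_apply, ContinuousLinearMap.smulRight_apply,
        ContinuousLinearMap.id_apply] at this
      rw [← this]
      exact h
    have hpos : 0 < ‖w‖ := norm_pos_iff.2 hw
    have h2 : ‖w‖ = |fderiv ℝ φ z w| * ‖v‖ := by
      rw [eq_neg_of_add_eq_zero_left h0, norm_neg, norm_smul, Real.norm_eq_abs,
        ← eq_neg_of_add_eq_zero_left h0]
    have h3 : |fderiv ℝ φ z w| ≤ K * ‖w‖ :=
      ((fderiv ℝ φ z).le_opNorm w).trans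
        (mul_le_mul_of_nonneg_right (hd.le_of_lipschitz hK) (norm_nonneg w))
    nlinarith [norm_nonneg v]

/-! ### Moving points inside a connected open set -/

/-- Some smooth embedding of the plane takes `x` to `y` and is the identity outside `V`. By
injectivity such an embedding maps `V` into itself. -/
def Movable (V : Set ℂ) (x y : ℂ) : Prop :=
  ∃ f : ℂ → ℂ, IsSmoothEmb f ∧ (∀ z ∉ V, f z = z) ∧ f x = y

lemma Movable.trans {V : Set ℂ} {x y z : ℂ} (h : Movable V x y) (h' : Movable V y z) :
    Movable V x z := by
  obtain ⟨f, hf, hfV, rfl⟩ := h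
  obtain ⟨g, hg, hgV, rfl⟩ := h'
  exact ⟨g ∘ f, hg.comp hf, fun z hz ↦ by simp [hfV z hz, hgV z hz], rfl⟩

lemma Movable.eventually {V : Set ℂ} (hV : IsOpen V) {x : ℂ} (hx : x ∈ V) :
    ∀ᶠ y in 𝓝 x, Movable V x y ∧ Movable V y x := by
  obtain ⟨r, hr, hrV⟩ := Metric.isOpen_iff.1 hV x hx
  let φ : ContDiffBump x := ⟨r / 2, r, by positivity, by linarith⟩
  have hφ : ContDiff ℝ (⊤ : ℕ∞) φ := φ.contDiff
  obtain ⟨K, hK⟩ := hφ.lipschitzWith_of_hasCompactSupport φ.hasCompactSupport (by simp)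
  have hout : ∀ z ∉ V, φ z = 0 := fun z hz ↦
    φ.zero_of_le_dist (not_lt.1 fun h ↦ hz (hrV h))
  have hs : ∀ᶠ y in 𝓝 x, (K : ℝ) * ‖y - x‖ < 1 := by
    have : Continuous fun y : ℂ ↦ (K : ℝ) * ‖y - x‖ := by fun_prop
    exact this.continuousAt.eventually_lt continuousAt_const (by simp)
  filter_upwards [hs, Metric.closedBall_mem_nhds x (half_pos hr)] with y hy hyr
  have hφx : φ x = 1 := φ.one_of_mem_closedBall (mem_closedBall_self φ.rIn_pos.le)
  have hφy : φ y = 1 := φ.one_of_mem_closedBall hyr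
  refine ⟨⟨_, isSmoothEmb_bump hφ hK hy, fun z hz ↦ by simp [hout z hz], by simp [hφx]⟩,
    ⟨_, isSmoothEmb_bump hφ hK (v := x - y) (by rwa [norm_sub_rev]),
      fun z hz ↦ by simp [hout z hz], by simp [hφy]⟩⟩

lemma Movable.of_isPreconnected {V : Set ℂ} (hV : IsOpen V) (hc : IsPreconnected V) {x y : ℂ}
    (hx : x ∈ V) (hy : y ∈ V) : Movable V x y :=
  hc.induction₂' (Movable V) (fun _ hz ↦ (Movable.eventually hV hz).filter_mono nhdsWithin_le_nhds)
    (fun _ _ _ _ _ _ ↦ Movable.trans) hx hy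

/-! ### Removing finitely many points -/

lemma isPreconnected_ball_diff_singleton (x : ℂ) (r : ℝ) : IsPreconnected (ball x r \ {x}) := by
  have : ball x r \ {x} = (fun p : ℝ × ℝ ↦ circleMap x p.1 p.2) '' (Ioo 0 r ×ˢ univ) := by
    ext z
    simp only [mem_sdiff, mem_ball, mem_singleton_iff, mem_image, mem_prod, mem_Ioo, mem_univ,
      and_true, Prod.exists]
    constructor
    · rintro ⟨h1, h2⟩
      refine ⟨‖z - x‖, (z - x).arg, ⟨norm_pos_iff.2 (sub_ne_zero.2 h2), by
        rwa [← dist_eq_norm]⟩, ?_⟩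
      simp [circleMap, Complex.norm_mul_exp_arg_mul_I]
    · rintro ⟨a, b, ⟨h1, h2⟩, rfl⟩
      refine ⟨?_, circleMap_ne_center h1.ne'⟩
      simpa [dist_eq_norm, circleMap, abs_of_pos h1] using h2
  rw [this]
  refine ((convex_Ioo 0 r).isPreconnected.prod isPreconnected_univ).image _ ?_
  refine Continuous.continuousOn ?_
  unfold circleMap
  fun_prop

lemma isPreconnected_diff_singleton {U : Set ℂ} (hU : IsOpen U) (hc : IsPreconnected U) (x : ℂ) :
    IsPreconnected (U \ {x}) := by
  by_cases hx : x ∈ U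
  swap
  · rwa [sdiff_singleton_eq_self hx]
  obtain ⟨r, hr, hrU⟩ := Metric.isOpen_iff.1 hU x hx
  -- A separation of `U \ {x}` puts the punctured ball on one side; adding `x` to that side would
  -- separate `U`.
  have key : ∀ u v : Set ℂ, IsOpen u → IsOpen v → U \ {x} ⊆ u ∪ v →
      U \ {x} ∩ (u ∩ v) = ∅ → ball x r \ {x} ⊆ u → U \ {x} ⊆ u := by
    intro u v hu hv huv hd hb
    have hd' : ∀ z ∈ U, z ≠ x → z ∈ u → z ∉ v := fun z hz hzx hzu hzv ↦ by
      have : z ∈ U \ {x} ∩ (u ∩ v) := ⟨⟨hz, hzx⟩, hzu, hzv⟩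
      rw [hd] at this
      exact this
    have hcover : U ⊆ (u ∪ ball x r) ∪ v \ {x} := by
      intro z hz
      by_cases hzx : z = x
      · exact Or.inl (Or.inr (by simpa [hzx] using hr))
      · rcases huv ⟨hz, hzx⟩ with h | h
        · exact Or.inl (Or.inl h)
        · exact Or.inr ⟨h, hzx⟩
    have hdisj : U ∩ ((u ∪ ball x r) ∩ (v \ {x})) = ∅ := by
      rw [eq_empty_iff_forall_notMem]
      rintro z ⟨hz, h1, h2, hzx⟩
      refine hd' z hz hzx ?_ h2
      rcases h1 with h1 | h1
      · exact h1
      · exact hb ⟨h1, hzx⟩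
    rcases isPreconnected_iff_subset_of_disjoint.1 hc (u ∪ ball x r) (v \ {x})
      (hu.union isOpen_ball) (hv.sdiff isClosed_singleton) hcover hdisj with h | h
    · rintro z ⟨hz, hzx⟩
      rcases h hz with h | h
      · exact h
      · exact hb ⟨h, hzx⟩
    · exact absurd rfl (h hx).2
  refine isPreconnected_iff_subset_of_disjoint.2 fun u v hu hv huv hd ↦ ?_
  have hsub : ball x r \ {x} ⊆ U \ {x} := sdiff_subset_sdiff_left hrU
  rcases isPreconnected_iff_subset_of_disjoint.1 (isPreconnected_ball_diff_singleton x r) u v hu hv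
    (hsub.trans huv) (subset_empty_iff.1 (hd ▸ inter_subset_inter_left _ hsub)) with h | h
  · exact Or.inl (key u v hu hv huv hd h)
  · exact Or.inr (key v u hv hu (by rwa [union_comm]) (by rwa [inter_comm v u]) h)

lemma isPreconnected_diff_finite {U : Set ℂ} (hU : IsOpen U) (hc : IsPreconnected U)
    (S : Finset ℂ) : IsPreconnected (U \ S) := by
  induction S using Finset.induction_on with
  | empty => simpa using hc
  | insert a S _ ih =>
    rw [Finset.coe_insert, ← union_singleton, ← sdiff_sdiff]
    exact isPreconnected_diff_singleton (hU.sdiff S.finite_toSet.isClosed) ih a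

/-! ### Smooth Jordan curves through prescribed points -/

lemma exists_smoothJordan_through {U : Set ℂ} (hU : IsOpen U) (hc : IsConnected U)
    (S : Finset ℂ) (hS : (S : Set ℂ) ⊆ U) :
    ∃ γ : ℝ → ℂ, IsSmoothJordan γ ∧ range γ ⊆ U ∧ (S : Set ℂ) ⊆ range γ := by
  induction S using Finset.induction_on with
  | empty =>
    obtain ⟨c, hcU⟩ := hc.nonempty
    obtain ⟨r, hr, hrU⟩ := Metric.isOpen_iff.1 hU c hcU
    refine ⟨circleMap c (r / 2), isSmoothJordan_circleMap c (half_pos hr), ?_, by simp⟩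
    rintro _ ⟨t, rfl⟩
    refine hrU (sphere_subset_ball (half_lt_self hr) (circleMap_mem_sphere c (half_pos hr).le t))
  | insert p S hpS ih =>
    rw [Finset.coe_insert, insert_subset_iff] at hS
    obtain ⟨γ, hγ, hγU, hγS⟩ := ih hS.2
    -- The curve has infinitely many points, so one of them avoids `S`.
    obtain ⟨q, ⟨t, rfl⟩, hqS⟩ : ∃ q ∈ range γ, q ∉ (S : Set ℂ) := by
      have hinf : (γ '' Ico 0 (2 * π)).Infinite :=
        (Ico_infinite Real.two_pi_pos).image hγ.injOn
      obtain ⟨q, hq, hqS⟩ := hinf.exists_notMem_finset S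
      exact ⟨q, image_subset_range _ _ hq, hqS⟩
    obtain ⟨f, hf, hfV, hfp⟩ := Movable.of_isPreconnected (hU.sdiff S.finite_toSet.isClosed)
      (isPreconnected_diff_finite hU hc.isPreconnected S)
      ⟨hγU (mem_range_self t), hqS⟩ (⟨hS.1, hpS⟩ : p ∈ U \ (S : Set ℂ))
    refine ⟨f ∘ γ, hγ.comp hf, ?_, ?_⟩
    · rintro _ ⟨s, rfl⟩
      -- An injective map fixing every point outside `U` cannot send a point of `U` outside `U`.
      by_contra hout
      have h1 := hf.inj (hfV (f (γ s)) fun h ↦ hout h.1)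
      exact hout (show f (γ s) ∈ U from h1.symm ▸ hγU (mem_range_self s))
    · rw [Finset.coe_insert, insert_subset_iff]
      refine ⟨⟨t, hfp⟩, fun s hs ↦ ?_⟩
      obtain ⟨t', rfl⟩ := hγS hs
      exact ⟨t', hfV _ fun h ↦ h.2 hs⟩

lemma IsConnected.thickening_complex {Γ : Set ℂ} (h : IsConnected Γ) {δ : ℝ} (hδ : 0 < δ) :
    IsConnected (thickening δ Γ) := by
  rw [← add_ball_zero, ← Set.add_image_prod]
  exact (h.prod (isConnected_ball hδ)).image _ continuous_add.continuousOn

/-- Smooth Jordan curves are dense among Jordan curves: for every Jordan curve `Γ ⊆ ℂ`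
and every `ε > 0`, there is a `2π`-periodic, infinitely differentiable map `γ : ℝ → ℂ`,
injective on `[0, 2π)`, with nowhere-vanishing derivative, whose image is within
Hausdorff distance `ε` of `Γ`. -/
theorem smooth_jordan_curves_dense
    (Γ : Set ℂ)
    (hΓ : ∃ g : ℂ → ℂ, ContinuousOn g (Metric.sphere (0 : ℂ) 1) ∧
      Set.InjOn g (Metric.sphere (0 : ℂ) 1) ∧ Γ = g '' Metric.sphere (0 : ℂ) 1)
    (ε : ℝ) (hε : 0 < ε) :
    ∃ γ : ℝ → ℂ,
      ContDiff ℝ (⊤ : ℕ∞) γ ∧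
      (∀ t : ℝ, γ (t + 2 * π) = γ t) ∧
      Set.InjOn γ (Set.Ico 0 (2 * π)) ∧
      (∀ t : ℝ, deriv γ t ≠ 0) ∧
      Metric.hausdorffDist (Set.range γ) Γ < ε := by
  obtain ⟨g, hg, -, rfl⟩ := hΓ
  have hconn : IsConnected (g '' sphere (0 : ℂ) 1) :=
    (isConnected_sphere (by simp [Complex.rank_real_complex]) 0 zero_le_one).image g hg
  have hcomp : IsCompact (g '' sphere (0 : ℂ) 1) := (isCompact_sphere 0 1).image_of_continuousOn hg
  have hδ : 0 < ε / 2 := half_pos hε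
  obtain ⟨S, hSΓ, hSfin, hcov⟩ := hcomp.finite_cover_balls hδ
  lift S to Finset ℂ using hSfin
  obtain ⟨γ, hγ, hγU, hγS⟩ := exists_smoothJordan_through isOpen_thickening
    (hconn.thickening_complex hδ) S (hSΓ.trans (self_subset_thickening hδ _))
  refine ⟨γ, hγ.contDiff, hγ.periodic, hγ.injOn, hγ.deriv_ne, ?_⟩
  refine (hausdorffDist_le_of_mem_dist hδ.le (fun x hx ↦ ?_) fun x hx ↦ ?_).trans_lt
    (half_lt_self hε)
  · obtain ⟨y, hy, hxy⟩ := mem_thickening_iff.1 (hγU hx)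
    exact ⟨y, hy, hxy.le⟩
  · obtain ⟨y, hy, hxy⟩ := mem_iUnion₂.1 (hcov hx)
    exact ⟨y, hγS hy, (mem_ball.1 hxy).le⟩
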